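/- arXiv:1309.2513 — 5 statements merged into one kernel-verified Lean document; each statement's English description precedes it below -/
import Mathlib

section
/- Suppose (H⁺, H⁻) is a dual pair of graded connected Hopf algebras over a commutative ring k. Let W ⊆ H⁺ be a k-submodule such that a·w ∈ W for all a ∈ H⁺ and w ∈ W, and ρ*_x(W) ⊆ W for all x ∈ H⁻. Then W = I·H⁺ (the k-submodule of H⁺ spanned by all elements c·a with c ∈ I and a ∈ H⁺), where I = {c ∈ k : c·1_{H⁺} ∈ W} is an ideal of k. -/
open scoped TensorProduct

/-- A Hopf pairing between bialgebras `Hm` (= `H⁻`) and `Hp` (= `H⁺`) over a commutative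
ring `k`: a bilinear map `p : Hm →ₗ Hp →ₗ k` satisfying
`⟨xy, a⟩ = Σ_{(a)} ⟨x, a₍₁₎⟩⟨y, a₍₂₎⟩`, `⟨x, ab⟩ = Σ_{(x)} ⟨x₍₁₎, a⟩⟨x₍₂₎, b⟩`,
`⟨1, a⟩ = ε(a)` and `⟨x, 1⟩ = ε(x)`. -/
structure IsHopfPairing (k : Type*) [CommRing k] (Hm Hp : Type*) [Ring Hm] [Ring Hp]
    [Bialgebra k Hm] [Bialgebra k Hp]
    (p : Hm →ₗ[k] Hp →ₗ[k] k) : Prop where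
  mul_left : ∀ (x y : Hm) (a : Hp), p (x * y) a =
    TensorProduct.lift ((LinearMap.mul k k).compl₁₂ (p x) (p y)) (Coalgebra.comul (R := k) a)
  mul_right : ∀ (x : Hm) (a b : Hp), p x (a * b) =
    TensorProduct.lift ((LinearMap.mul k k).compl₁₂ (p.flip a) (p.flip b))
      (Coalgebra.comul (R := k) x)
  one_left : ∀ a : Hp, p 1 a = Coalgebra.counit (R := k) a
  one_right : ∀ x : Hm, p x 1 = Coalgebra.counit (R := k) x

/-- The left-regular action operator `ρ*_x : H⁺ → H⁺`, `ρ*_x(a) = Σ_{(a)} ⟨x, a₍₂₎⟩ a₍₁₎`. -/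
noncomputable def rhoStar {k : Type*} [CommRing k] {Hm Hp : Type*} [Ring Hm] [Ring Hp]
    [Bialgebra k Hm] [Bialgebra k Hp]
    (p : Hm →ₗ[k] Hp →ₗ[k] k) (x : Hm) : Hp →ₗ[k] Hp :=
  (TensorProduct.lift (((LinearMap.lsmul k Hp).comp (p x)).flip)).comp
    (Coalgebra.comul (R := k))


/-- A graded connected Hopf algebra structure on a Hopf algebra `H` over `k`: a direct sum
decomposition `H = ⊕ₙ Hₙ` into finitely generated free `k`-submodules with
`Hⱼ·Hₗ ⊆ H_{j+ℓ}`, `Δ(Hₙ) ⊆ ⊕_{j=0}^n Hⱼ ⊗ H_{n−j}`, `H₀ = k·1` and `ε(Hₙ) = 0` for `n > 0`. -/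
structure GradedConnected (k : Type*) [CommRing k] (H : Type*) [Ring H] [HopfAlgebra k H]
    (ℬ : ℕ → Submodule k H) : Prop where
  internal : DirectSum.IsInternal ℬ
  fg : ∀ n, (ℬ n).FG
  free : ∀ n, Module.Free k (ℬ n)
  mul_mem : ∀ {m n : ℕ} {a b : H}, a ∈ ℬ m → b ∈ ℬ n → a * b ∈ ℬ (m + n)
  comul_mem : ∀ (n : ℕ), ∀ a ∈ ℬ n, Coalgebra.comul (R := k) a ∈
    ⨆ j ∈ Finset.range (n + 1),
      LinearMap.range (TensorProduct.map (ℬ j).subtype (ℬ (n - j)).subtype)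
  zero_eq : ℬ 0 = 1
  counit_eq_zero : ∀ n, 0 < n → ∀ a ∈ ℬ n, Coalgebra.counit (R := k) a = 0

/-- A dual pair `(H⁺, H⁻)` of graded connected Hopf algebras: a Hopf pairing
`⟨·,·⟩ : H⁻ × H⁺ → k` such that `⟨H⁻ₘ, H⁺ₙ⟩ = 0` for `m ≠ n` and the restriction of the
pairing to `H⁻ₙ × H⁺ₙ` is a perfect pairing for every `n`. -/
structure IsDualPair (k : Type*) [CommRing k] (Hm Hp : Type*) [Ring Hm] [Ring Hp]
    [HopfAlgebra k Hm] [HopfAlgebra k Hp]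
    (ℬm : ℕ → Submodule k Hm) (ℬp : ℕ → Submodule k Hp)
    (p : Hm →ₗ[k] Hp →ₗ[k] k) : Prop where
  gradedM : GradedConnected k Hm ℬm
  gradedP : GradedConnected k Hp ℬp
  pairing : IsHopfPairing k Hm Hp p
  orth : ∀ {m n : ℕ}, m ≠ n → ∀ x ∈ ℬm m, ∀ a ∈ ℬp n, p x a = 0
  perfect : ∀ n, Function.Bijective ((p.domRestrict (ℬm n)).compl₂ (ℬp n).subtype)

theorem counit_rhoStar {k : Type*} [CommRing k] {Hm Hp : Type*} [Ring Hm] [Ring Hp]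
    [Bialgebra k Hm] [Bialgebra k Hp]
    (p : Hm →ₗ[k] Hp →ₗ[k] k) (x : Hm) (a : Hp) :
    Coalgebra.counit (R := k) (rhoStar p x a) = p x a := by
  have h : (Coalgebra.counit (R := k) (A := Hp)).comp
      (TensorProduct.lift (((LinearMap.lsmul k Hp).comp (p x)).flip)) =
      ((p x).comp (TensorProduct.lid k Hp).toLinearMap).comp
        ((Coalgebra.counit (R := k) (A := Hp)).rTensor Hp) := by
    ext b c
    simp [mul_comm]
  have h2 := LinearMap.congr_fun h (Coalgebra.comul (R := k) a)
  simp only [LinearMap.comp_apply, Coalgebra.rTensor_counit_comul] at h2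
  simpa [rhoStar] using h2

theorem rhoStar_top {k : Type*} [CommRing k] {Hm Hp : Type*} [Ring Hm] [Ring Hp]
    [HopfAlgebra k Hm] [HopfAlgebra k Hp]
    {ℬm : ℕ → Submodule k Hm} {ℬp : ℕ → Submodule k Hp}
    (p : Hm →ₗ[k] Hp →ₗ[k] k) (hD : IsDualPair k Hm Hp ℬm ℬp p)
    {j n : ℕ} (hjn : j ≤ n) {x : Hm} (hx : x ∈ ℬm n) {a : Hp} (ha : a ∈ ℬp j) :
    rhoStar p x a = algebraMap k Hp (p x a) := by
  have hmem : rhoStar p x a ∈ ℬp 0 := by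
    have hle : (⨆ i ∈ Finset.range (j + 1),
        LinearMap.range (TensorProduct.map (ℬp i).subtype (ℬp (j - i)).subtype)) ≤
        (ℬp 0).comap (TensorProduct.lift (((LinearMap.lsmul k Hp).comp (p x)).flip)) := by
      refine iSup₂_le fun i hi => ?_
      rintro _ ⟨t, rfl⟩
      induction t with
      | zero => simp
      | add s t hs ht => rw [map_add]; exact add_mem hs ht
      | tmul b c =>
        simp only [Submodule.mem_comap, TensorProduct.map_tmul, TensorProduct.lift.tmul,
          Submodule.subtype_apply, LinearMap.flip_apply, LinearMap.comp_apply,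
          LinearMap.lsmul_apply]
        by_cases h : n = j - i
        · have hi0 : i = 0 := by
            rw [Finset.mem_range] at hi
            omega
          subst hi0
          exact Submodule.smul_mem _ _ b.2
        · rw [hD.orth h x hx c c.2, zero_smul]
          exact zero_mem _
    exact hle (hD.gradedP.comul_mem j a ha)
  rw [hD.gradedP.zero_eq, Submodule.mem_one] at hmem
  obtain ⟨c, hc⟩ := hmem
  have h := counit_rhoStar p x a
  rw [← hc, Bialgebra.counit_algebraMap] at h
  rw [← hc, h]

theorem mem_smul_of_pairing {k : Type*} [CommRing k] {Hm Hp : Type*} [Ring Hm] [Ring Hp]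
    [HopfAlgebra k Hm] [HopfAlgebra k Hp]
    {ℬm : ℕ → Submodule k Hm} {ℬp : ℕ → Submodule k Hp}
    (p : Hm →ₗ[k] Hp →ₗ[k] k) (hD : IsDualPair k Hm Hp ℬm ℬp p) (I : Ideal k)
    {n : ℕ} {v : Hp} (hv : v ∈ ℬp n) (h : ∀ x ∈ ℬm n, p x v ∈ I) :
    v ∈ I • (⊤ : Submodule k Hp) := by
  haveI := hD.gradedP.free n
  haveI : Module.Finite k (ℬp n) := Module.Finite.iff_fg.mpr (hD.gradedP.fg n)
  let b := Module.Free.chooseBasis k (ℬp n)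
  have hs := b.sum_repr ⟨v, hv⟩
  have hs' := congrArg (ℬp n).subtype hs
  rw [map_sum] at hs'
  change _ = v at hs'
  rw [← hs']
  refine Submodule.sum_mem _ fun i _ => ?_
  rw [map_smul]
  refine Submodule.smul_mem_smul ?_ trivial
  obtain ⟨x, hx⟩ := (hD.perfect n).2 (b.coord i)
  have h1 := LinearMap.congr_fun hx ⟨v, hv⟩
  have h2 : p x v = b.repr ⟨v, hv⟩ i := h1
  rw [← h2]
  exact h x x.2

/-- in a dual pair over a commutative ring `k`, if `W ⊆ H⁺` is a `k`-submodule
closed under left multiplication by `H⁺` and under all operators `ρ*_x` (`x ∈ H⁻`), then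
`W = I·H⁺`, where `I = {c ∈ k : c·1 ∈ W}` (an ideal of `k`, here realized as the comap of
`W` under `c ↦ c·1`). -/
theorem submodule_eq_ideal_smul {k : Type*} [CommRing k] {Hm Hp : Type*} [Ring Hm] [Ring Hp]
    [HopfAlgebra k Hm] [HopfAlgebra k Hp]
    {ℬm : ℕ → Submodule k Hm} {ℬp : ℕ → Submodule k Hp}
    (p : Hm →ₗ[k] Hp →ₗ[k] k) (hD : IsDualPair k Hm Hp ℬm ℬp p)
    (W : Submodule k Hp)
    (hmul : ∀ (a : Hp), ∀ w ∈ W, a * w ∈ W)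
    (hrho : ∀ (x : Hm), ∀ w ∈ W, rhoStar p x w ∈ W) :
    W = (W.comap (Algebra.linearMap k Hp) : Ideal k) • (⊤ : Submodule k Hp) := by
  have hge : (W.comap (Algebra.linearMap k Hp) : Ideal k) • (⊤ : Submodule k Hp) ≤ W := by
    refine Submodule.smul_le.mpr fun c hc a _ => ?_
    have h := hmul a _ hc
    rwa [Algebra.linearMap_apply, ← Algebra.commutes, ← Algebra.smul_def] at h
  apply le_antisymm
  · have key : ∀ n : ℕ, ∀ w ∈ W, w ∈ (Finset.range n).sup ℬp →
        w ∈ (W.comap (Algebra.linearMap k Hp) : Ideal k) • (⊤ : Submodule k Hp) := by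
      intro n
      induction n with
      | zero =>
        intro w _ hw
        simp at hw
        simp [hw]
      | succ n ih =>
        intro w hwW hw
        rw [Finset.range_add_one, Finset.sup_insert, Submodule.mem_sup] at hw
        obtain ⟨v, hv, u, hu, rfl⟩ := hw
        have hvI : v ∈ (W.comap (Algebra.linearMap k Hp) : Ideal k) • (⊤ : Submodule k Hp) := by
          refine mem_smul_of_pairing p hD _ hv fun x hx => ?_
          have hu0 : rhoStar p x u = 0 := by
            have hle : (Finset.range n).sup ℬp ≤ LinearMap.ker (rhoStar p x) := by
              refine Finset.sup_le fun i hi a ha => ?_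
              rw [Finset.mem_range] at hi
              rw [LinearMap.mem_ker, rhoStar_top p hD hi.le hx ha,
                hD.orth (by omega) x hx a ha, map_zero]
            exact hle hu
          have h := hrho x _ hwW
          rw [map_add, hu0, add_zero, rhoStar_top p hD le_rfl hx hv] at h
          exact h
        have hvW : v ∈ W := hge hvI
        refine add_mem hvI (ih u ?_ hu)
        simpa using sub_mem hwW hvW
    intro w hw
    have hex : ∃ n, w ∈ (Finset.range n).sup ℬp := by
      have htop : w ∈ ⨆ i, ℬp i := by
        rw [hD.gradedP.internal.submodule_iSup_eq_top]
        trivial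
      have hle : (⨆ i, ℬp i) ≤ ⨆ n, (Finset.range n).sup ℬp :=
        iSup_le fun i => (Finset.le_sup (f := ℬp) (Finset.self_mem_range_succ i)).trans
          (le_iSup (fun n => (Finset.range n).sup ℬp) (i + 1))
      refine (Submodule.mem_iSup_of_directed _ ?_).mp (hle htop)
      exact (show Monotone fun n => (Finset.range n).sup ℬp from fun m n hmn =>
        Finset.sup_mono (Finset.range_mono hmn)).directed_le
    obtain ⟨n, hn⟩ := hex
    exact key n w hw hn
  · exact hge
end

section
/- Suppose (H⁺, H⁻) is a dual pair of graded connected Hopf algebras over a field k, and let X⁺ ⊆ H⁺ be a k-subalgebra such that ρ*_x(X⁺) ⊆ X⁺ for all x ∈ H⁻. Then the only k-subspaces W ⊆ X⁺ satisfying a·w ∈ W for all a ∈ X⁺, w ∈ W and ρ*_x(W) ⊆ W for all x ∈ H⁻ are W = {0} and W = X⁺; that is, the Fock space X⁺ is irreducible as a module over the algebra X⁺ # H⁻. -/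
open scoped TensorProduct

/-- `ρ*_x` sends `H⁺_i` to `H⁺_0` if `x ∈ H⁻_n` with `i ≤ n`. -/
theorem rhoStar_mem_zero {k : Type*} [Field k] {Hm Hp : Type*} [Ring Hm] [Ring Hp]
    [HopfAlgebra k Hm] [HopfAlgebra k Hp]
    {ℬm : ℕ → Submodule k Hm} {ℬp : ℕ → Submodule k Hp}
    (p : Hm →ₗ[k] Hp →ₗ[k] k) (hD : IsDualPair k Hm Hp ℬm ℬp p)
    {n i : ℕ} (hi : i ≤ n) {x : Hm} (hx : x ∈ ℬm n) {a : Hp} (ha : a ∈ ℬp i) :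
    rhoStar p x a ∈ ℬp 0 := by
  have h := hD.gradedP.comul_mem i a ha
  have hle : (⨆ j ∈ Finset.range (i + 1),
      LinearMap.range (TensorProduct.map (ℬp j).subtype (ℬp (i - j)).subtype)) ≤
      (ℬp 0).comap (TensorProduct.lift (((LinearMap.lsmul k Hp).comp (p x)).flip)) := by
    refine iSup₂_le fun j hj => ?_
    rintro _ ⟨t, rfl⟩
    induction t with
    | zero => simp
    | add s t hs ht => rw [map_add]; exact Submodule.add_mem _ hs ht
    | tmul u v =>
      have hj' := Finset.mem_range.1 hj
      rcases Nat.eq_zero_or_pos j with rfl | hj0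
      · simpa using Submodule.smul_mem _ _ u.2
      · have : p x v = 0 := hD.orth (by omega) x hx v v.2
        simp [this]
  exact hle h

/-- in a dual pair over a field `k`, if `X⁺ ⊆ H⁺` is a subalgebra invariant
under all `ρ*_x`, then the only subspaces `W ⊆ X⁺` closed under left multiplication by `X⁺`
and under all `ρ*_x` are `{0}` and `X⁺`: the Fock space `X⁺` is an irreducible
`X⁺ # H⁻`-module. -/
theorem fockSpace_irreducible {k : Type*} [Field k] {Hm Hp : Type*} [Ring Hm] [Ring Hp]
    [HopfAlgebra k Hm] [HopfAlgebra k Hp]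
    {ℬm : ℕ → Submodule k Hm} {ℬp : ℕ → Submodule k Hp}
    (p : Hm →ₗ[k] Hp →ₗ[k] k) (hD : IsDualPair k Hm Hp ℬm ℬp p)
    (X : Subalgebra k Hp)
    (hX : ∀ (x : Hm), ∀ a ∈ X, rhoStar p x a ∈ X)
    (W : Submodule k Hp) (hWX : W ≤ Subalgebra.toSubmodule X)
    (hmul : ∀ a ∈ X, ∀ w ∈ W, a * w ∈ W)
    (hrho : ∀ (x : Hm), ∀ w ∈ W, rhoStar p x w ∈ W) :
    W = ⊥ ∨ W = Subalgebra.toSubmodule X := by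
  classical
  rcases eq_or_ne W ⊥ with h | h
  · exact Or.inl h
  refine Or.inr (le_antisymm hWX ?_)
  obtain ⟨w, hw, hw0⟩ := (Submodule.ne_bot_iff _).1 h
  suffices h1 : (1 : Hp) ∈ W by
    intro a ha
    simpa using hmul a ha 1 h1
  letI := hD.gradedP.internal.chooseDecomposition
  have hsum := DirectSum.sum_support_decompose ℬp w
  have hne : (DirectSum.decompose ℬp w).support.Nonempty := by
    rw [Finset.nonempty_iff_ne_empty]
    intro he
    rw [he] at hsum
    exact hw0 (by simpa using hsum.symm)
  set n := (DirectSum.decompose ℬp w).support.max' hne with hn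
  have hnmem : n ∈ (DirectSum.decompose ℬp w).support := Finset.max'_mem _ hne
  have hwn : (DirectSum.decompose ℬp w n) ≠ 0 := by simpa using hnmem
  obtain ⟨f, hf⟩ := Module.Projective.exists_dual_ne_zero k hwn
  obtain ⟨x, hx⟩ := (hD.perfect n).2 f
  have hpn : p x (DirectSum.decompose ℬp w n : Hp) ≠ 0 := by
    rw [← hx] at hf
    exact hf
  have hpw : p x w = p x (DirectSum.decompose ℬp w n : Hp) := by
    conv_lhs => rw [← hsum]
    rw [map_sum]
    refine Finset.sum_eq_single n (fun i _ hi => ?_) (fun hh => absurd hnmem hh)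
    exact hD.orth hi.symm x x.2 _ (DirectSum.decompose ℬp w i).2
  have hmem : rhoStar p (x : Hm) w ∈ ℬp 0 := by
    rw [← hsum, map_sum]
    refine Submodule.sum_mem _ fun i hi => ?_
    exact rhoStar_mem_zero p hD (Finset.le_max' _ i hi) x.2 (DirectSum.decompose ℬp w i).2
  rw [hD.gradedP.zero_eq] at hmem
  obtain ⟨c, hc⟩ := Submodule.mem_one.1 hmem
  have hW := hrho x w hw
  have hc0 : c ≠ 0 := by
    rintro rfl
    have := counit_rhoStar p (x : Hm) w
    rw [← hc, hpw] at this
    exact hpn (by simpa using this.symm)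
  rw [← hc, Algebra.algebraMap_eq_smul_one] at hW
  exact (Submodule.smul_mem_iff _ hc0).1 hW
end

section
/- (Faithfulness of the Fock space representation of the Heisenberg double.) Suppose (H⁺, H⁻) is a dual pair of graded connected Hopf algebras over k. Then the k-linear map H⁺ ⊗_k H⁻ → End_k(H⁺) determined by a ⊗ x ↦ (b ↦ a · ρ*_x(b)) is injective. -/
open scoped TensorProduct

/-- `ψ(b) = Σ ⟨xᵢ, b⟩ aᵢ`. -/
noncomputable def fockPsi {k : Type*} [CommRing k] {Hm Hp : Type*} [Ring Hm] [Ring Hp]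
    [HopfAlgebra k Hm] [HopfAlgebra k Hp]
    (p : Hm →ₗ[k] Hp →ₗ[k] k) {N : ℕ} (a : Fin N → Hp) (x : Fin N → Hm) : Hp →ₗ[k] Hp :=
  ∑ i, (p (x i)).smulRight (a i)

theorem fockPsi_apply {k : Type*} [CommRing k] {Hm Hp : Type*} [Ring Hm] [Ring Hp]
    [HopfAlgebra k Hm] [HopfAlgebra k Hp]
    (p : Hm →ₗ[k] Hp →ₗ[k] k) {N : ℕ} (a : Fin N → Hp) (x : Fin N → Hm) (b : Hp) :
    fockPsi p a x b = ∑ i, p (x i) b • a i := by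
  simp [fockPsi]

theorem fock_action {k : Type*} [CommRing k] {Hm Hp : Type*} [Ring Hm] [Ring Hp]
    [HopfAlgebra k Hm] [HopfAlgebra k Hp]
    (p : Hm →ₗ[k] Hp →ₗ[k] k) {N : ℕ} (a : Fin N → Hp) (x : Fin N → Hm) (b : Hp) :
    ∑ i, a i * rhoStar p (x i) b =
      TensorProduct.lift (((LinearMap.mul k Hp).comp (fockPsi p a x)).flip)
        (Coalgebra.comul (R := k) b) := by
  simp only [rhoStar, LinearMap.comp_apply]
  induction (Coalgebra.comul (R := k) b) using TensorProduct.induction_on with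
  | zero => simp
  | tmul u v => simp [fockPsi_apply]
  | add u v hu hv => simp only [map_add, mul_add, Finset.sum_add_distrib, hu, hv]

theorem fockPsi_zero {k : Type*} [CommRing k] {Hm Hp : Type*} [Ring Hm] [Ring Hp]
    [HopfAlgebra k Hm] [HopfAlgebra k Hp]
    {ℬp : ℕ → Submodule k Hp}
    (p : Hm →ₗ[k] Hp →ₗ[k] k) (hG : GradedConnected k Hp ℬp)
    {N : ℕ} (a : Fin N → Hp) (x : Fin N → Hm)
    (h : ∀ b : Hp, ∑ i, a i * rhoStar p (x i) b = 0) (n : ℕ) :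
    ∀ b ∈ ℬp n, fockPsi p a x b = 0 := by
  induction n using Nat.strong_induction_on with
  | _ n ih =>
    intro b hb
    set L := TensorProduct.lift (((LinearMap.mul k Hp).comp (fockPsi p a x)).flip) with hL
    let R : Hp ⊗[k] Hp →ₗ[k] Hp := (fockPsi p a x).comp
      ((TensorProduct.lid k Hp).toLinearMap.comp
        (LinearMap.rTensor Hp (Coalgebra.counit (R := k) (A := Hp))))
    have key : (⨆ j ∈ Finset.range (n + 1),
        LinearMap.range (TensorProduct.map (ℬp j).subtype (ℬp (n - j)).subtype)) ≤
        LinearMap.eqLocus L R := by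
      refine iSup₂_le fun j hj => ?_
      rintro _ ⟨z, rfl⟩
      rw [LinearMap.mem_eqLocus]
      induction z using TensorProduct.induction_on with
      | zero => simp
      | add u v hu hv => simp only [map_add, hu, hv]
      | tmul u v =>
        rcases Nat.eq_zero_or_pos j with rfl | hj0
        · have hu : (u : Hp) ∈ (1 : Submodule k Hp) := hG.zero_eq ▸ u.2
          obtain ⟨c, hc⟩ := Submodule.mem_one.1 hu
          simp [L, R, ← hc, Algebra.algebraMap_eq_smul_one]
        · have h1 := hG.counit_eq_zero j hj0 u u.2
          have h2 := ih (n - j) (by have := Finset.mem_range.1 hj; omega) v v.2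
          simp [L, R, h1, h2]
    have h1 : L (Coalgebra.comul (R := k) b) = R (Coalgebra.comul (R := k) b) :=
      key (hG.comul_mem n b hb)
    rw [hL, ← fock_action, h b] at h1
    simpa [R] using h1.symm

/-- faithfulness of the Fock space representation of the Heisenberg double:
in a dual pair, the `k`-linear map `H⁺ ⊗ H⁻ → End(H⁺)`, `a ⊗ x ↦ (b ↦ a·ρ*_x(b))`, is
injective.  Equivalently (as stated here): any element `Σᵢ aᵢ ⊗ xᵢ` of `H⁺ ⊗ H⁻` all of
whose actions `b ↦ Σᵢ aᵢ·ρ*_{xᵢ}(b)` vanish is itself zero. -/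
theorem fockSpace_faithful {k : Type*} [CommRing k] {Hm Hp : Type*} [Ring Hm] [Ring Hp]
    [HopfAlgebra k Hm] [HopfAlgebra k Hp]
    {ℬm : ℕ → Submodule k Hm} {ℬp : ℕ → Submodule k Hp}
    (p : Hm →ₗ[k] Hp →ₗ[k] k) (hD : IsDualPair k Hm Hp ℬm ℬp p)
    (N : ℕ) (a : Fin N → Hp) (x : Fin N → Hm)
    (h : ∀ b : Hp, ∑ i, a i * rhoStar p (x i) b = 0) :
    ∑ i, a i ⊗ₜ[k] x i = (0 : Hp ⊗[k] Hm) := by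
  classical
  have hψ := fockPsi_zero p hD.gradedP a x h
  have : ∀ n, Module.Free k (ℬp n) := hD.gradedP.free
  have : ∀ n, Module.Finite k (ℬp n) := fun n => Module.Finite.iff_fg.2 (hD.gradedP.fg n)
  let f := fun n => Module.Free.chooseBasis k (ℬp n)
  let E := fun n => LinearEquiv.ofBijective _ (hD.perfect n)
  let e := fun n => (f n).dualBasis.map (E n).symm
  have he : ∀ n i (b : ℬp n), p (e n i : Hm) b = (f n).repr b i := by
    intro n i b
    have h1 : E n (e n i) b = (f n).dualBasis i b := by simp [e]
    simpa [E] using h1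
  let B := hD.gradedM.internal.collectedBasis e
  have hB : ∀ α (y : Hm), B.repr y α = p y (f α.1 α.2 : Hp) := by
    intro α y
    have : (B.coord α) = p.flip (f α.1 α.2 : Hp) := by
      refine B.ext fun β => ?_
      obtain ⟨m, j⟩ := β
      obtain ⟨n, i⟩ := α
      have hBe : B ⟨m, j⟩ = (e m j : Hm) := by simp [B]
      rw [Module.Basis.coord_apply, Module.Basis.repr_self, LinearMap.flip_apply, hBe]
      by_cases hmn : m = n
      · subst hmn
        rw [he, Module.Basis.repr_self, Finsupp.single_apply, Finsupp.single_apply]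
        by_cases hij : i = j
        · subst hij
          simp
        · have hji : ¬ j = i := fun h => hij h.symm
          simp [hij, hji]
      · rw [hD.orth hmn (e m j) (e m j).2 (f n i) (f n i).2, Finsupp.single_apply, if_neg]
        intro h
        exact hmn (congrArg Sigma.fst h)
    exact LinearMap.congr_fun this y
  apply (TensorProduct.equivFinsuppOfBasisRight (M := Hp) B).injective
  ext α
  have := hψ α.1 (f α.1 α.2) (f α.1 α.2).2
  rw [fockPsi_apply] at this
  simpa [Finsupp.finsetSum_apply, hB] using this
end

section
/- Fix, for each w ∈ S_n, a reduced word of w and let T_w ∈ B_n be the corresponding product of generators. Then the family {T_w : w ∈ S_n} is a basis of B_n as an F-vector space; in particular, dim_F B_n = n!. -/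
open scoped TensorProduct

namespace HeckeLikeTower

variable (F : Type*) [Field F]

/-- The defining relations of the Hecke-like algebra of degree `n` over `F` with parameters
`c, d`.  The generators `T_1, …, T_{n-1}` are indexed by `Fin (n-1)`, where the index
`i : Fin (n-1)` corresponds to the generator `T_{i+1}`. -/
inductive Rel (c d : F) (n : ℕ) :
    FreeAlgebra F (Fin (n - 1)) → FreeAlgebra F (Fin (n - 1)) → Prop
  | comm (i j : Fin (n - 1)) (h : (i : ℕ) + 1 < (j : ℕ)) :
      Rel c d n (FreeAlgebra.ι F i * FreeAlgebra.ι F j)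
        (FreeAlgebra.ι F j * FreeAlgebra.ι F i)
  | braid (i j : Fin (n - 1)) (h : (j : ℕ) = (i : ℕ) + 1) :
      Rel c d n (FreeAlgebra.ι F i * FreeAlgebra.ι F j * FreeAlgebra.ι F i)
        (FreeAlgebra.ι F j * FreeAlgebra.ι F i * FreeAlgebra.ι F j)
  | quad (i : Fin (n - 1)) :
      Rel c d n (FreeAlgebra.ι F i * FreeAlgebra.ι F i)
        (c • FreeAlgebra.ι F i + algebraMap F (FreeAlgebra F (Fin (n - 1))) d)

/-- The Hecke-like algebra `B_n` of degree `n` over `F` with parameters `c, d`: the quotient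
of the free associative unital `F`-algebra on `T_1, …, T_{n-1}` by the two-sided ideal
generated by the relations. -/
abbrev B (c d : F) (n : ℕ) : Type _ := RingQuot (Rel F c d n)

/-- The generator `T_{i+1}` of the Hecke-like algebra `B_n` (for `i : Fin (n-1)`). -/
def T (c d : F) (n : ℕ) (i : Fin (n - 1)) : B F c d n :=
  RingQuot.mkAlgHom F (Rel F c d n) (FreeAlgebra.ι F i)

/-- The adjacent transposition `s_{i+1} = (i+1, i+2) ∈ S_n` (for `i : Fin (n-1)`), acting on
`Fin n` by swapping `i` and `i+1` (`0`-based). -/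
def s (n : ℕ) (i : Fin (n - 1)) : Equiv.Perm (Fin n) :=
  Equiv.swap ⟨(i : ℕ), lt_of_lt_of_le i.isLt (Nat.sub_le n 1)⟩
    ⟨(i : ℕ) + 1, by have := i.isLt; omega⟩

/-- The product in `S_n` of the adjacent transpositions along a word. -/
def wordProd (n : ℕ) (l : List (Fin (n - 1))) : Equiv.Perm (Fin n) :=
  (l.map (s n)).prod

/-- The product `T_{i_1} ⋯ T_{i_r}` in `B_n` along a word `(i_1, …, i_r)`. -/
def Tword (c d : F) (n : ℕ) (l : List (Fin (n - 1))) : B F c d n :=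
  (l.map (T F c d n)).prod

/-- `l` is a reduced word for the permutation `w ∈ S_n`: the corresponding product of
adjacent transpositions is `w`, and `l` has minimal length among all such words (its length
is then the Coxeter length `ℓ(w)`). -/
def IsReducedWord (n : ℕ) (w : Equiv.Perm (Fin n)) (l : List (Fin (n - 1))) : Prop :=
  wordProd n l = w ∧
    ∀ l' : List (Fin (n - 1)), wordProd n l' = w → l.length ≤ l'.length

/-- The Coxeter length `ℓ(w)` of `w ∈ S_n` with respect to the adjacent transpositions. -/
noncomputable def len (n : ℕ) (w : Equiv.Perm (Fin n)) : ℕ :=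
  sInf {r | ∃ l : List (Fin (n - 1)), wordProd n l = w ∧ l.length = r}

end HeckeLikeTower

open HeckeLikeTower


namespace HeckeLikeTower

section Helpers

variable {n : ℕ}

/-- lower point moved by `s i` -/
def lo (i : Fin (n - 1)) : Fin n := ⟨(i : ℕ), lt_of_lt_of_le i.isLt (Nat.sub_le n 1)⟩

/-- upper point moved by `s i` -/
def hi (i : Fin (n - 1)) : Fin n := ⟨(i : ℕ) + 1, by have := i.isLt; omega⟩

theorem s_eq (i : Fin (n - 1)) : s n i = Equiv.swap (lo i) (hi i) := rfl

theorem s_inv (i : Fin (n - 1)) : (s n i)⁻¹ = s n i := by simp [s_eq]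

theorem s_mul_s (i : Fin (n - 1)) : s n i * s n i = 1 := by simp [s_eq]

theorem s_mul_s_mul (i : Fin (n - 1)) (w : Equiv.Perm (Fin n)) :
    s n i * (s n i * w) = w := by rw [← mul_assoc, s_mul_s, one_mul]

theorem s_lo (i : Fin (n - 1)) : s n i (lo i) = hi i := by simp [s_eq]

theorem s_hi (i : Fin (n - 1)) : s n i (hi i) = lo i := by simp [s_eq]

theorem s_other (i : Fin (n - 1)) (x : Fin n) (h1 : (x : ℕ) ≠ i) (h2 : (x : ℕ) ≠ i + 1) :
    s n i x = x := by
  rw [s_eq]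
  apply Equiv.swap_apply_of_ne_of_ne
  · intro h; apply h1; rw [h]; rfl
  · intro h; apply h2; rw [h]; rfl

/-- `i` is a left descent of `w` -/
def Des (i : Fin (n - 1)) (w : Equiv.Perm (Fin n)) : Prop := w⁻¹ (hi i) < w⁻¹ (lo i)

theorem lo_ne_hi (i : Fin (n - 1)) : lo i ≠ hi i := by
  intro h
  have := congrArg Fin.val h
  simp [lo, hi] at this

theorem not_des (i : Fin (n - 1)) (w : Equiv.Perm (Fin n)) :
    ¬ Des i w ↔ w⁻¹ (lo i) < w⁻¹ (hi i) := by
  unfold Des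
  rw [not_lt]
  constructor
  · intro h
    exact lt_of_le_of_ne h (fun h' => lo_ne_hi i (w⁻¹.injective h'))
  · exact le_of_lt

theorem inv_apply (i : Fin (n - 1)) (w : Equiv.Perm (Fin n)) (x : Fin n) :
    (s n i * w)⁻¹ x = w⁻¹ (s n i x) := by
  rw [mul_inv_rev, s_inv]; rfl

theorem des_self (i : Fin (n - 1)) (w : Equiv.Perm (Fin n)) :
    Des i (s n i * w) ↔ ¬ Des i w := by
  rw [not_des]
  unfold Des
  rw [inv_apply, inv_apply, s_lo, s_hi]

theorem des_far₁ {i j : Fin (n - 1)} (h : (i : ℕ) + 1 < j) (w : Equiv.Perm (Fin n)) :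
    Des i (s n j * w) ↔ Des i w := by
  unfold Des
  rw [inv_apply, inv_apply, s_other j (lo i), s_other j (hi i)] <;> simp [lo, hi] <;> omega

theorem des_far₂ {i j : Fin (n - 1)} (h : (i : ℕ) + 1 < j) (w : Equiv.Perm (Fin n)) :
    Des j (s n i * w) ↔ Des j w := by
  unfold Des
  rw [inv_apply, inv_apply, s_other i (lo j), s_other i (hi j)] <;> simp [lo, hi] <;> omega

/-- the long descent -/
def PDes (i j : Fin (n - 1)) (w : Equiv.Perm (Fin n)) : Prop := w⁻¹ (hi j) < w⁻¹ (lo i)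

theorem lo_eq_hi {i j : Fin (n - 1)} (h : (j : ℕ) = i + 1) : lo j = hi i := by
  apply Fin.ext; simpa [lo, hi] using h

theorem des_near₁ {i j : Fin (n - 1)} (h : (j : ℕ) = i + 1) (w : Equiv.Perm (Fin n)) :
    Des j (s n i * w) ↔ PDes i j w := by
  unfold Des PDes
  rw [inv_apply, inv_apply, lo_eq_hi h, s_hi, s_other i (hi j)] <;> simp [hi] <;> omega

theorem des_near₂ {i j : Fin (n - 1)} (h : (j : ℕ) = i + 1) (w : Equiv.Perm (Fin n)) :
    Des i (s n j * w) ↔ PDes i j w := by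
  unfold Des PDes
  rw [inv_apply, inv_apply, ← lo_eq_hi h, s_lo, s_other j (lo i)] <;> simp [lo] <;> omega

theorem des_near₃ {i j : Fin (n - 1)} (h : (j : ℕ) = i + 1) (w : Equiv.Perm (Fin n)) :
    Des i (s n j * (s n i * w)) ↔ Des j w := by
  rw [des_near₂ h]
  unfold Des PDes
  rw [inv_apply, inv_apply, lo_eq_hi h, s_lo, s_other i (hi j)] <;> simp [hi] <;> omega

theorem des_near₄ {i j : Fin (n - 1)} (h : (j : ℕ) = i + 1) (w : Equiv.Perm (Fin n)) :
    Des j (s n i * (s n j * w)) ↔ Des i w := by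
  rw [des_near₁ h]
  unfold Des PDes
  rw [inv_apply, inv_apply, ← lo_eq_hi h, s_hi, s_other j (lo i)] <;> simp [lo] <;> omega

theorem pdes₁ {i j : Fin (n - 1)} (h : (j : ℕ) = i + 1) (w : Equiv.Perm (Fin n)) :
    PDes i j (s n i * w) ↔ Des j w := by
  rw [← des_near₂ h, des_near₃ h]

theorem pdes₂ {i j : Fin (n - 1)} (h : (j : ℕ) = i + 1) (w : Equiv.Perm (Fin n)) :
    PDes i j (s n j * w) ↔ Des i w := by
  rw [← des_near₁ h, des_near₄ h]

theorem pdes_of {i j : Fin (n - 1)} (h : (j : ℕ) = i + 1) {w : Equiv.Perm (Fin n)}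
    (h1 : Des i w) (h2 : Des j w) : PDes i j w := by
  unfold Des PDes at *
  rw [lo_eq_hi h] at h2
  exact h2.trans h1

theorem not_pdes_of {i j : Fin (n - 1)} (h : (j : ℕ) = i + 1) {w : Equiv.Perm (Fin n)}
    (h1 : ¬ Des i w) (h2 : ¬ Des j w) : ¬ PDes i j w := by
  rw [not_des] at *
  unfold PDes
  rw [lo_eq_hi h] at h2
  exact not_lt.mpr (h1.trans h2).le

theorem s_comm {i j : Fin (n - 1)} (h : (i : ℕ) + 1 < j) (w : Equiv.Perm (Fin n)) :
    s n i * (s n j * w) = s n j * (s n i * w) := by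
  rw [← mul_assoc, ← mul_assoc]
  congr 1
  rw [s_eq, s_eq]
  apply Equiv.Perm.Disjoint.commute
  apply Equiv.Perm.disjoint_swap_swap
  simp [lo, hi]
  omega

theorem s_braid {i j : Fin (n - 1)} (h : (j : ℕ) = i + 1) (w : Equiv.Perm (Fin n)) :
    s n i * (s n j * (s n i * w)) = s n j * (s n i * (s n j * w)) := by
  simp only [← mul_assoc]
  congr 1
  have h1 : s n i * s n j * s n i = Equiv.swap (lo i) (hi j) := by
    have := Equiv.swap_apply_apply (s n i) (lo j) (hi j)
    rw [s_inv, ← s_eq, lo_eq_hi h, s_hi, s_other i (hi j)] at this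
    · exact this.symm
    all_goals simp [hi]; omega
  have h2 : s n j * s n i * s n j = Equiv.swap (lo i) (hi j) := by
    have := Equiv.swap_apply_apply (s n j) (lo i) (hi i)
    rw [s_inv, ← s_eq, ← lo_eq_hi h, s_lo, s_other j (lo i)] at this
    · exact this.symm
    all_goals simp [lo]; omega
  rw [h1, h2]

/-- inversions -/
def invSet (w : Equiv.Perm (Fin n)) : Finset (Fin n × Fin n) :=
  Finset.univ.filter (fun p => p.1 < p.2 ∧ w p.2 < w p.1)

/-- number of inversions -/
def inv (w : Equiv.Perm (Fin n)) : ℕ := (invSet w).card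

theorem s_val (i : Fin (n - 1)) (x : Fin n) : ((s n i x : Fin n) : ℕ) =
    if (x : ℕ) = i then (i : ℕ) + 1 else if (x : ℕ) = i + 1 then (i : ℕ) else x := by
  split_ifs with h1 h2
  · have : x = lo i := Fin.ext h1
    rw [this, s_lo]; rfl
  · have : x = hi i := Fin.ext h2
    rw [this, s_hi]; rfl
  · rw [s_other i x h1 h2]

theorem inv_up {i : Fin (n - 1)} {w : Equiv.Perm (Fin n)} (h : ¬ Des i w) :
    inv (s n i * w) = inv w + 1 := by
  rw [not_des] at h
  have key : invSet (s n i * w) = insert (w⁻¹ (lo i), w⁻¹ (hi i)) (invSet w) := by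
    ext ⟨a, b⟩
    rw [Finset.mem_insert, invSet, invSet, Finset.mem_filter, Finset.mem_filter]
    simp only [Finset.mem_univ, true_and,
      Prod.mk.injEq, Equiv.Perm.mul_apply, Equiv.Perm.eq_inv_iff_eq]
    have hab : a < b → (w a : ℕ) ≠ w b := fun hlt he => by
      have := w.injective (Fin.ext he)
      exact absurd this hlt.ne
    have e1 : w a = lo i ↔ (w a : ℕ) = i := by rw [Fin.ext_iff]; rfl
    have e2 : w b = hi i ↔ (w b : ℕ) = i + 1 := by rw [Fin.ext_iff]; rfl
    have e3 : (w a : ℕ) = i → (w b : ℕ) = i + 1 → a < b := by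
      intro ha hb
      rw [← e1] at ha
      rw [← e2] at hb
      rw [← ha, ← hb] at h
      simpa using h
    have e4 : (w a : ℕ) = i + 1 → (w b : ℕ) = i → ¬ a < b := by
      intro ha hb
      have ha' : w a = hi i := Fin.ext ha
      have hb' : w b = lo i := Fin.ext hb
      rw [← ha', ← hb'] at h
      simp at h
      exact not_lt.mpr h.le
    rw [e1, e2, Fin.lt_def (a := s n i (w b)), Fin.lt_def (a := w b), s_val, s_val]
    constructor
    · rintro ⟨hlt, h2⟩
      have := hab hlt
      by_cases h5 : (w a : ℕ) = i + 1 ∧ (w b : ℕ) = i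
      · exact absurd hlt (e4 h5.1 h5.2)
      · by_cases h6 : (w a : ℕ) = i ∧ (w b : ℕ) = i + 1
        · exact Or.inl h6
        · right
          refine ⟨hlt, ?_⟩
          split_ifs at h2 <;> omega
    · rintro (⟨h1, h2⟩ | ⟨hlt, h2⟩)
      · refine ⟨e3 h1 h2, ?_⟩
        split_ifs <;> omega
      · refine ⟨hlt, ?_⟩
        have := hab hlt
        by_cases h5 : (w a : ℕ) = i + 1 ∧ (w b : ℕ) = i
        · exact absurd hlt (e4 h5.1 h5.2)
        · split_ifs <;> omega
  unfold inv
  rw [key, Finset.card_insert_of_notMem]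
  simp only [invSet, Finset.mem_filter, Finset.mem_univ, true_and, not_and, not_lt]
  intro _
  simp [Fin.le_def, lo, hi]

theorem inv_down {i : Fin (n - 1)} {w : Equiv.Perm (Fin n)} (h : Des i w) :
    inv (s n i * w) + 1 = inv w := by
  have h' : ¬ Des i (s n i * w) := by rw [des_self]; simpa using h
  have := inv_up h'
  rw [s_mul_s_mul] at this
  exact this.symm

theorem inv_one : inv (1 : Equiv.Perm (Fin n)) = 0 := by
  unfold inv invSet
  rw [Finset.card_eq_zero, Finset.filter_eq_empty_iff]
  rintro ⟨a, b⟩ _ ⟨h1, h2⟩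
  exact absurd h1 (not_lt.mpr (le_of_lt (by simpa using h2)))

theorem eq_one_of_no_des {w : Equiv.Perm (Fin n)} (h : ∀ i, ¬ Des i w) : w = 1 := by
  cases n with
  | zero => exact Subsingleton.elim _ _
  | succ m =>
    have hm : StrictMono (w⁻¹ : Equiv.Perm (Fin (m + 1))) := by
      rw [Fin.strictMono_iff_lt_succ]
      intro i
      have := h i
      rw [not_des] at this
      exact this
    have h2 : (w⁻¹ : Equiv.Perm (Fin (m + 1))) = 1 := by
      apply Equiv.ext
      intro x
      have := (StrictMono.range_inj hm strictMono_id).mp (by simp [(w⁻¹).surjective.range_eq])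
      rw [this]; rfl
    exact inv_eq_one.mp h2

/-- `l` is a word for `w` whose length is the number of inversions -/
def R (l : List (Fin (n - 1))) (w : Equiv.Perm (Fin n)) : Prop :=
  wordProd n l = w ∧ l.length = inv w

theorem wordProd_cons (i : Fin (n - 1)) (l : List (Fin (n - 1))) :
    wordProd n (i :: l) = s n i * wordProd n l := by simp [wordProd]

theorem inv_le (l : List (Fin (n - 1))) : inv (wordProd n l) ≤ l.length := by
  induction l with
  | nil => simp [wordProd, inv_one]
  | cons i l ih =>
    rw [wordProd_cons, List.length_cons]
    by_cases h : Des i (wordProd n l)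
    · have := inv_down h; omega
    · have := inv_up h; omega

theorem R_cons {i : Fin (n - 1)} {l : List (Fin (n - 1))} {w : Equiv.Perm (Fin n)}
    (h : R (i :: l) w) : Des i w ∧ R l (s n i * w) := by
  obtain ⟨h1, h2⟩ := h
  rw [wordProd_cons] at h1
  have h3 : wordProd n l = s n i * w := by rw [← h1, s_mul_s_mul]
  have h4 := inv_le l
  rw [h3] at h4
  rw [List.length_cons] at h2
  by_cases hd : Des i w
  · have := inv_down hd
    exact ⟨hd, h3, by omega⟩
  · have := inv_up hd
    omega

theorem R_of_des {i : Fin (n - 1)} {l : List (Fin (n - 1))} {w : Equiv.Perm (Fin n)}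
    (hd : Des i w) (h : R l (s n i * w)) : R (i :: l) w := by
  refine ⟨?_, ?_⟩
  · rw [wordProd_cons, h.1, s_mul_s_mul]
  · rw [List.length_cons, h.2, inv_down hd]

theorem R_of_not_des {i : Fin (n - 1)} {l : List (Fin (n - 1))} {w : Equiv.Perm (Fin n)}
    (hd : ¬ Des i w) (h : R l w) : R (i :: l) (s n i * w) := by
  apply R_of_des
  · rwa [des_self]
  · rwa [s_mul_s_mul]

theorem exists_R (w : Equiv.Perm (Fin n)) : ∃ l, R l w := by
  induction h : inv w using Nat.strong_induction_on generalizing w with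
  | _ k ih =>
    by_cases hd : ∀ i, ¬ Des i w
    · rw [eq_one_of_no_des hd]
      exact ⟨[], by simp [wordProd], by simp [inv_one]⟩
    · push Not at hd
      obtain ⟨i, hi⟩ := hd
      have := inv_down hi
      obtain ⟨l, hl⟩ := ih (inv (s n i * w)) (by omega) _ rfl
      exact ⟨i :: l, R_of_des hi hl⟩

theorem R_of_reduced {l : List (Fin (n - 1))} {w : Equiv.Perm (Fin n)}
    (h : IsReducedWord n w l) : R l w := by
  refine ⟨h.1, ?_⟩
  obtain ⟨l', hl'⟩ := exists_R w
  have h1 := h.2 l' hl'.1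
  have h2 := inv_le l
  rw [h.1] at h2
  have := hl'.2
  omega

variable {F : Type*} [Field F] {c d : F}

theorem T_comm {i j : Fin (n - 1)} (h : (i : ℕ) + 1 < j) :
    T F c d n i * T F c d n j = T F c d n j * T F c d n i := by
  unfold T
  rw [← map_mul, ← map_mul]
  exact RingQuot.mkAlgHom_rel F (Rel.comm i j h)

theorem T_braid {i j : Fin (n - 1)} (h : (j : ℕ) = i + 1) :
    T F c d n i * T F c d n j * T F c d n i = T F c d n j * T F c d n i * T F c d n j := by
  unfold T
  simp only [← map_mul]
  exact RingQuot.mkAlgHom_rel F (Rel.braid i j h)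

theorem T_quad (i : Fin (n - 1)) :
    T F c d n i * T F c d n i = c • T F c d n i + d • 1 := by
  have := RingQuot.mkAlgHom_rel F (Rel.quad (c := c) (d := d) (n := n) i)
  rw [map_mul, map_add, map_smul, AlgHom.commutes, Algebra.algebraMap_eq_smul_one] at this
  exact this

theorem Tword_cons (i : Fin (n - 1)) (l : List (Fin (n - 1))) :
    Tword F c d n (i :: l) = T F c d n i * Tword F c d n l := by simp [Tword]

theorem matsumoto_aux (k : ℕ) : ∀ (w : Equiv.Perm (Fin n)) (l l' : List (Fin (n - 1))),
    inv w = k → R l w → R l' w → Tword F c d n l = Tword F c d n l' := by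
  induction k using Nat.strong_induction_on with
  | _ k ih =>
    -- the case of two distinct first letters in increasing order
    have main : ∀ (w : Equiv.Perm (Fin n)) (i j : Fin (n - 1)) (l l' : List (Fin (n - 1))),
        (i : ℕ) < j → inv w = k → R (i :: l) w → R (j :: l') w →
        Tword F c d n (i :: l) = Tword F c d n (j :: l') := by
      intro w i j l l' hij hk h h'
      obtain ⟨hi, hl⟩ := R_cons h
      obtain ⟨hj, hl'⟩ := R_cons h'
      have li := inv_down hi
      have lj := inv_down hj
      rw [Tword_cons, Tword_cons]
      by_cases hfar : (i : ℕ) + 1 < j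
      · obtain ⟨m, hm⟩ := exists_R (s n i * (s n j * w))
        have m1 : R (i :: m) (s n j * w) := R_of_des ((des_far₁ hfar w).mpr hi) hm
        rw [s_comm hfar] at hm
        have m2 : R (j :: m) (s n i * w) := R_of_des ((des_far₂ hfar w).mpr hj) hm
        rw [ih _ (by omega) _ _ _ rfl hl m2, ih _ (by omega) _ _ _ rfl hl' m1,
          Tword_cons, Tword_cons, ← mul_assoc, ← mul_assoc, T_comm hfar]
      · have hn : (j : ℕ) = i + 1 := by omega
        have hp := pdes_of hn hi hj
        obtain ⟨m, hm⟩ := exists_R (s n i * (s n j * (s n i * w)))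
        have m1 : R (j :: i :: m) (s n i * w) :=
          R_of_des ((des_near₁ hn w).mpr hp) (R_of_des ((des_near₃ hn w).mpr hj) hm)
        rw [s_braid hn] at hm
        have m2 : R (i :: j :: m) (s n j * w) :=
          R_of_des ((des_near₂ hn w).mpr hp) (R_of_des ((des_near₄ hn w).mpr hi) hm)
        rw [ih _ (by omega) _ _ _ rfl hl m1, ih _ (by omega) _ _ _ rfl hl' m2]
        simp only [Tword_cons, ← mul_assoc]
        rw [T_braid hn]
    intro w l l' hk h h'
    match l, l', h, h' with
    | [], [], _, _ => rfl
    | [], j :: l', h, h' =>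
      have := h.2.trans h'.2.symm
      simp at this
    | i :: l, [], h, h' =>
      have := h.2.trans h'.2.symm
      simp at this
    | i :: l, j :: l', h, h' =>
      rcases lt_trichotomy (i : ℕ) j with hij | hij | hij
      · exact main w i j l l' hij hk h h'
      · have : i = j := Fin.ext hij
        subst this
        obtain ⟨hi, hl⟩ := R_cons h
        obtain ⟨-, hl'⟩ := R_cons h'
        have li := inv_down hi
        rw [Tword_cons, Tword_cons, ih _ (by omega) _ _ _ rfl hl hl']
      · exact (main w j i l' l hij hk h' h).symm

theorem matsumoto {w : Equiv.Perm (Fin n)} {l l' : List (Fin (n - 1))}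
    (h : R l w) (h' : R l' w) : Tword F c d n l = Tword F c d n l' :=
  matsumoto_aux _ w l l' rfl h h'

open Classical in
/-- the operator of left multiplication by `T i` -/
noncomputable def L (c d : F) (i : Fin (n - 1)) :
    (Equiv.Perm (Fin n) →₀ F) →ₗ[F] (Equiv.Perm (Fin n) →₀ F) :=
  Finsupp.linearCombination F (fun w => if Des i w then
    c • Finsupp.single w (1 : F) + d • Finsupp.single (s n i * w) (1 : F)
    else Finsupp.single (s n i * w) (1 : F))

theorem L_des {i : Fin (n - 1)} {w : Equiv.Perm (Fin n)} (h : Des i w) :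
    L c d i (Finsupp.single w 1) =
      c • Finsupp.single w (1 : F) + d • Finsupp.single (s n i * w) (1 : F) := by
  rw [L, Finsupp.linearCombination_single, one_smul, if_pos h]

theorem L_not_des {i : Fin (n - 1)} {w : Equiv.Perm (Fin n)} (h : ¬ Des i w) :
    L c d i (Finsupp.single w 1) = Finsupp.single (s n i * w) (1 : F) := by
  rw [L, Finsupp.linearCombination_single, one_smul, if_neg h]

theorem hom_ext' {f g : (Equiv.Perm (Fin n) →₀ F) →ₗ[F] (Equiv.Perm (Fin n) →₀ F)}
    (h : ∀ w, f (Finsupp.single w 1) = g (Finsupp.single w 1)) : f = g := by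
  apply Finsupp.lhom_ext'
  intro w
  apply LinearMap.ext_ring
  exact h w

theorem L_quad (i : Fin (n - 1)) : L c d i * L c d i = c • L c d i + d • 1 := by
  apply hom_ext'
  intro w
  simp only [Module.End.mul_apply, LinearMap.add_apply, LinearMap.smul_apply, Module.End.one_apply]
  by_cases h : Des i w
  · have h' : ¬ Des i (s n i * w) := by rw [des_self]; simpa using h
    simp only [L_des h, map_add, map_smul, L_not_des h', s_mul_s_mul]
  · have h' : Des i (s n i * w) := by rwa [des_self]
    simp only [L_not_des h, L_des h', s_mul_s_mul]

theorem L_comm {i j : Fin (n - 1)} (h : (i : ℕ) + 1 < j) :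
    L c d i * L c d j = L c d j * L c d i := by
  apply hom_ext'
  intro w
  simp only [Module.End.mul_apply]
  have a1 := des_far₁ h w
  have a2 := des_far₂ h w
  by_cases hi : Des i w <;> by_cases hj : Des j w <;> simp only [hi, hj, iff_true, iff_false] at a1 a2
  · simp only [L_des hi, L_des hj, L_des a1, L_des a2, map_add, map_smul, s_comm h]
    module
  · simp only [L_des hi, L_not_des hj, L_des a1, L_not_des a2, map_add, map_smul, s_comm h]
  · simp only [L_not_des hi, L_des hj, L_not_des a1, L_des a2, map_add, map_smul, s_comm h]
  · simp only [L_not_des hi, L_not_des hj, L_not_des a1, L_not_des a2, s_comm h]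

open Classical in
theorem L_ite (i : Fin (n - 1)) (w : Equiv.Perm (Fin n)) :
    L c d i (Finsupp.single w 1) = if Des i w then
      c • Finsupp.single w (1 : F) + d • Finsupp.single (s n i * w) (1 : F)
      else Finsupp.single (s n i * w) (1 : F) := by
  rw [L, Finsupp.linearCombination_single, one_smul]

theorem L_braid {i j : Fin (n - 1)} (h : (j : ℕ) = i + 1) :
    L c d i * L c d j * L c d i = L c d j * L c d i * L c d j := by
  apply hom_ext'
  intro w
  simp only [Module.End.mul_apply]
  have b1 := @pdes_of n i j h w
  have b2 := @not_pdes_of n i j h w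
  by_cases hi : Des i w <;> by_cases hj : Des j w <;> by_cases hp : PDes i j w <;>
    first
    | exact absurd (b1 hi hj) hp
    | exact absurd hp (b2 hi hj)
    | (simp only [L_ite,  map_add, map_smul, des_self, des_near₁ h, des_near₂ h,
        pdes₁ h, pdes₂ h, hi, hj, hp, if_true, if_false, not_true, not_false_iff,
        s_mul_s_mul, s_braid h]
       try module)

/-- the regular representation -/
noncomputable def rho (c d : F) (n : ℕ) :
    B F c d n →ₐ[F] Module.End F (Equiv.Perm (Fin n) →₀ F) :=
  RingQuot.liftAlgHom F ⟨FreeAlgebra.lift F (fun i => L c d i), by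
    intro x y hxy
    cases hxy with
    | comm i j h => simpa using L_comm h
    | braid i j h => simpa using L_braid h
    | quad i =>
      simp only [map_mul, map_add, map_smul, AlgHom.commutes, FreeAlgebra.lift_ι_apply]
      rw [Algebra.algebraMap_eq_smul_one]
      exact L_quad i⟩

theorem rho_T (i : Fin (n - 1)) : rho c d n (T F c d n i) = L c d i := by
  unfold rho T
  rw [RingQuot.liftAlgHom_mkAlgHom_apply]
  simp

theorem rho_Tword {l : List (Fin (n - 1))} : ∀ {w : Equiv.Perm (Fin n)}, R l w →
    rho c d n (Tword F c d n l) (Finsupp.single 1 1) = Finsupp.single w (1 : F) := by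
  induction l with
  | nil =>
    intro w h
    have := h.1
    simp [wordProd] at this
    simp [Tword, this]
  | cons i l ih =>
    intro w h
    obtain ⟨hd, hl⟩ := R_cons h
    have h' : ¬ Des i (s n i * w) := by rw [des_self]; simpa using hd
    rw [Tword_cons, map_mul, Module.End.mul_apply, ih hl, rho_T, L_not_des h', s_mul_s_mul]

theorem linInd (word : Equiv.Perm (Fin n) → List (Fin (n - 1))) (hR : ∀ w, R (word w) w) :
    LinearIndependent F (fun w : Equiv.Perm (Fin n) => Tword F c d n (word w)) := by
  let f : B F c d n →ₗ[F] (Equiv.Perm (Fin n) →₀ F) :=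
    (LinearMap.applyₗ (Finsupp.single 1 (1 : F))) ∘ₗ (rho c d n).toLinearMap
  apply LinearIndependent.of_comp f
  have : (f ∘ fun w : Equiv.Perm (Fin n) => Tword F c d n (word w)) =
      fun w => Finsupp.single w (1 : F) := by
    funext w
    exact rho_Tword (hR w)
  rw [this]
  exact Finsupp.linearIndependent_single_one F _

theorem spans (word : Equiv.Perm (Fin n) → List (Fin (n - 1))) (hR : ∀ w, R (word w) w) :
    Submodule.span F (Set.range (fun w : Equiv.Perm (Fin n) => Tword F c d n (word w))) = ⊤ := by
  set M := Submodule.span F (Set.range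
    (fun w : Equiv.Perm (Fin n) => Tword F c d n (word w))) with hM
  have mem : ∀ w, Tword F c d n (word w) ∈ M := fun w => Submodule.subset_span ⟨w, rfl⟩
  have one_mem : (1 : B F c d n) ∈ M := by
    have h0 : R [] (1 : Equiv.Perm (Fin n)) := ⟨by simp [wordProd], by simp [inv_one]⟩
    have := mem 1
    rw [matsumoto (hR 1) h0] at this
    simpa [Tword] using this
  have T_mem : ∀ i, ∀ m ∈ M, T F c d n i * m ∈ M := by
    intro i m hm
    induction hm using Submodule.span_induction with
    | mem x hx =>
      obtain ⟨w, rfl⟩ := hx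
      dsimp only
      by_cases hd : Des i w
      · have h1 := R_of_des hd (hR (s n i * w))
        rw [matsumoto (hR w) h1, Tword_cons, ← mul_assoc, T_quad, add_mul, smul_mul_assoc,
          smul_mul_assoc, one_mul, ← Tword_cons, matsumoto h1 (hR w)]
        exact M.add_mem (M.smul_mem _ (mem _)) (M.smul_mem _ (mem _))
      · rw [← Tword_cons, matsumoto (R_of_not_des hd (hR w)) (hR _)]
        exact mem _
    | zero => simp
    | add x y _ _ hx hy => rw [mul_add]; exact M.add_mem hx hy
    | smul a x _ hx => rw [mul_smul_comm]; exact M.smul_mem _ hx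
  have all_mem : ∀ x : FreeAlgebra F (Fin (n - 1)), ∀ m ∈ M,
      RingQuot.mkAlgHom F (Rel F c d n) x * m ∈ M := by
    intro x
    induction x using FreeAlgebra.induction with
    | grade0 r =>
      intro m hm
      rw [AlgHom.commutes, Algebra.algebraMap_eq_smul_one, smul_mul_assoc, one_mul]
      exact M.smul_mem _ hm
    | grade1 i => exact T_mem i
    | mul a b ha hb =>
      intro m hm
      rw [map_mul, mul_assoc]
      exact ha _ (hb _ hm)
    | add a b ha hb =>
      intro m hm
      rw [map_add, add_mul]
      exact M.add_mem (ha _ hm) (hb _ hm)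
  rw [eq_top_iff]
  intro x _
  obtain ⟨y, rfl⟩ := RingQuot.mkAlgHom_surjective F (Rel F c d n) x
  simpa using all_mem y 1 one_mem

end Helpers

end HeckeLikeTower

/-- fixing for each `w ∈ S_n` a reduced word, the family `{T_w : w ∈ S_n}` is
a basis of the Hecke-like algebra `B_n` as an `F`-vector space (linearly independent and
spanning); in particular `dim_F B_n = n!`. -/
theorem heckeLike_Tw_basis (F : Type*) [Field F] (c d : F) (n : ℕ) (hn : 0 < n)
    (word : Equiv.Perm (Fin n) → List (Fin (n - 1)))
    (hword : ∀ w, IsReducedWord n w (word w)) :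
    LinearIndependent F (fun w : Equiv.Perm (Fin n) => Tword F c d n (word w)) ∧
    Submodule.span F (Set.range (fun w : Equiv.Perm (Fin n) => Tword F c d n (word w))) = ⊤ ∧
    Module.finrank F (B F c d n) = Nat.factorial n := by
  have hR : ∀ w, R (word w) w := fun w => R_of_reduced (hword w)
  have h1 := linInd (c := c) (d := d) word hR
  have h2 := spans (c := c) (d := d) word hR
  refine ⟨h1, h2, ?_⟩
  rw [Module.finrank_eq_card_basis (Module.Basis.mk h1 h2.ge), Fintype.card_perm, Fintype.card_fin]
end

section
/- Suppose n ≥ 2 and let 1 ≤ i ≤ n−1. Then the generator T_i is a unit in B_n if and only if d ≠ 0. Moreover, if d ≠ 0 then T_i⁻¹ = d⁻¹(T_i − c), while if d = 0 then T_i is a nonzero zero divisor in B_n. -/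
open scoped TensorProduct

open HeckeLikeTower

theorem T_sq (F : Type*) [Field F] (c d : F) (n : ℕ) (i : Fin (n - 1)) :
    T F c d n i * T F c d n i = c • T F c d n i + algebraMap F (B F c d n) d := by
  have h := RingQuot.mkAlgHom_rel F (Rel.quad (c := c) (d := d) i)
  simp only [map_mul, map_add, map_smul, AlgHom.commutes] at h
  exact h

/-- Sending every generator to one root `x` of the quadratic relation is a representation. -/
theorem exists_rep (F : Type*) [Field F] (c d : F) (n : ℕ) {A : Type*} [Ring A] [Algebra F A]
    (x : A) (hx : x * x = c • x + algebraMap F A d) :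
    ∃ f : B F c d n →ₐ[F] A, ∀ i, f (T F c d n i) = x := by
  refine ⟨RingQuot.liftAlgHom F ⟨FreeAlgebra.lift F (fun _ => x), ?_⟩, fun i => ?_⟩
  · intro a b h
    cases h with
    | comm i j h => simp
    | braid i j h => simp
    | quad i => simpa using hx
  · simp [T]

/-- for `n ≥ 2` and a generator `T_i` of `B_n`: `T_i` is a unit iff `d ≠ 0`;
if `d ≠ 0` then `T_i⁻¹ = d⁻¹(T_i − c)`; and if `d = 0` then `T_i` is a nonzero zero
divisor. -/
theorem heckeLike_unit_iff (F : Type*) [Field F] (c d : F) (n : ℕ) (hn : 2 ≤ n)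
    (i : Fin (n - 1)) :
    (IsUnit (T F c d n i) ↔ d ≠ 0) ∧
    (d ≠ 0 →
      T F c d n i * (d⁻¹ • (T F c d n i - algebraMap F (B F c d n) c)) = 1 ∧
      (d⁻¹ • (T F c d n i - algebraMap F (B F c d n) c)) * T F c d n i = 1) ∧
    (d = 0 → T F c d n i ≠ 0 ∧
      ∃ b : B F c d n, b ≠ 0 ∧ T F c d n i * b = 0 ∧ b * T F c d n i = 0) := by
  have hsq := T_sq F c d n i
  have hz : d = 0 → T F c d n i ≠ 0 ∧
      ∃ b : B F c d n, b ≠ 0 ∧ T F c d n i * b = 0 ∧ b * T F c d n i = 0 := by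
    rintro rfl
    obtain ⟨f, hf⟩ := exists_rep F c 0 n (!![0, 0; 1, c] : Matrix (Fin 2) (Fin 2) F) (by
      ext a b; fin_cases a <;> fin_cases b <;> simp [Matrix.mul_apply])
    refine ⟨fun h => ?_, T F c 0 n i - algebraMap F _ c, fun h => ?_, ?_, ?_⟩
    · have h2 := hf i
      rw [h, map_zero] at h2
      simpa using congrFun (congrFun h2 1) 0
    · have h2 := congrArg f h
      rw [map_sub, hf, AlgHom.commutes, map_zero] at h2
      simpa [Matrix.algebraMap_matrix_apply] using congrFun (congrFun h2 1) 0
    · rw [mul_sub, hsq, ← Algebra.commutes, ← Algebra.smul_def]; simp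
    · rw [sub_mul, hsq, ← Algebra.smul_def]; simp
  have hu : d ≠ 0 →
      T F c d n i * (d⁻¹ • (T F c d n i - algebraMap F (B F c d n) c)) = 1 ∧
      (d⁻¹ • (T F c d n i - algebraMap F (B F c d n) c)) * T F c d n i = 1 := by
    intro hd
    constructor
    · rw [mul_smul_comm, mul_sub, hsq, ← Algebra.commutes, ← Algebra.smul_def,
        add_sub_cancel_left, Algebra.algebraMap_eq_smul_one, smul_smul, inv_mul_cancel₀ hd,
        one_smul]
    · rw [smul_mul_assoc, sub_mul, hsq, ← Algebra.smul_def,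
        add_sub_cancel_left, Algebra.algebraMap_eq_smul_one, smul_smul, inv_mul_cancel₀ hd,
        one_smul]
  refine ⟨⟨fun h hd => ?_, fun hd => ?_⟩, hu, hz⟩
  · obtain ⟨_, b, hb, h1, _⟩ := hz hd
    exact hb ((h.mul_right_eq_zero).1 h1)
  · exact ⟨⟨_, _, (hu hd).1, (hu hd).2⟩, rfl⟩
end
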